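/- Consider Ensemble 2 of unstructured irregular GLDPC codes with variable-node edge-degree polynomial λ(x) = ∑_{d=2}^{d_v} λ_d x^{d−1} and check-node types with weight enumerators A^{(t)}(z); assume at least one check-node type has local minimum distance r_t = 2, and let C = 2·∑_{t : r_t = 2} ρ_t A_2^{(t)}/s_t. Then, for a code drawn uniformly at random from Ensemble 2 with block length N, the probability that its minimum distance equals 1 satisfies lim_{N→∞} Pr(d_min = 1) = 1 − exp(−λ′(0)·C/2) > 0, where λ′(0) = λ_2. -/

import Mathlib

/-!
A word of weight one is a codeword exactly when the sockets of its variable node are sent to a set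
of check sockets accepted by all local codes. Since no local codeword has weight one, a node of
degree two contributes when its two sockets land on an edge of the graph formed by the weight-two
local codewords. The factorial moments of the number of such nodes converge to those of a Poisson
variable: conditioning on `k` successes removes only `O(k)` sockets and `O(k)` edges of this
bounded-degree graph. A contributing node of larger degree makes three of its sockets take part in
collisions at check nodes, and these coincidences have total probability `O(1/E)`.
-/

open Filter

/-- The set of codewords of the binary linear local code with parity-check matrix `H`. -/
def localCode {mr n : ℕ} (H : Matrix (Fin mr) (Fin n) (ZMod 2)) :
    Finset (Fin n → ZMod 2) :=
  Finset.univ.filter (fun v => Matrix.mulVec H v = 0)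

/-- The number `A_2^{(t)}` of weight-2 codewords of the code with parity-check matrix `H`. -/
def numWeight2 {mr n : ℕ} (H : Matrix (Fin mr) (Fin n) (ZMod 2)) : ℕ :=
  ((localCode H).filter (fun v => hammingNorm v = 2)).card

namespace GLDPC
open Finset

section BinomialMoments

variable {Ω V : Type*} [Fintype Ω] [Fintype V] [DecidableEq Ω]

/-- The `k`-th binomial moment `𝔼[X.choose k]` of the number `X` of events `B v` that occur at a
uniformly random point of `Ω`, written as the sum of the probabilities of all `k`-fold
intersections. -/
noncomputable def binomialMoment (B : V → Finset Ω) (k : ℕ) : ℝ :=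
  ∑ A ∈ powersetCard k univ, ((A.inf B).dens : ℝ)

variable (B : V → Finset Ω)

lemma binomialMoment_nonneg (k : ℕ) : 0 ≤ binomialMoment B k :=
  sum_nonneg fun _ _ ↦ NNRat.cast_nonneg _

lemma binomialMoment_zero [Nonempty Ω] : binomialMoment B 0 = 1 := by
  simp [binomialMoment]

lemma binomialMoment_eq_zero_of_card_lt {k : ℕ} (hk : Fintype.card V < k) :
    binomialMoment B k = 0 := by
  rw [binomialMoment, powersetCard_eq_empty.2 (by simpa using hk), sum_empty]

lemma succ_mul_binomialMoment_succ [DecidableEq V] (k : ℕ) :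
    (k + 1) * binomialMoment B (k + 1) =
      ∑ A ∈ powersetCard k univ, ∑ v ∈ Aᶜ, (((insert v A).inf B).dens : ℝ) := by
  have sum_erase : ∀ A ∈ powersetCard (k + 1) (univ : Finset V),
      (k + 1) * ((A.inf B).dens : ℝ) = ∑ _v ∈ A, ((A.inf B).dens : ℝ) := by
    intro A hA
    rw [sum_const, mem_powersetCard_univ.1 hA, nsmul_eq_mul]
    push_cast
    rfl
  rw [binomialMoment, mul_sum, sum_congr rfl sum_erase, sum_sigma', sum_sigma']
  refine sum_bij' (fun p _ ↦ ⟨p.1.erase p.2, p.2⟩) (fun p _ ↦ ⟨insert p.2 p.1, p.2⟩) ?_ ?_ ?_ ?_ ?_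
  all_goals
    rintro ⟨A, v⟩ h
    simp only [mem_sigma, mem_powersetCard_univ, mem_compl] at h
  · simp [card_erase_of_mem h.2, h.1]
  · simp [card_insert_of_notMem h.2, h.1]
  · simp [insert_erase h.2]
  · simp [erase_insert h.2]
  · simp [insert_erase h.2]

theorem dens_inf_compl_eq_tsum :
    ((univ.inf fun v ↦ (B v)ᶜ).dens : ℝ) = ∑' k, (-1) ^ k * binomialMoment B k := by
  have inclusion_exclusion :
      ((univ.inf fun v ↦ (B v)ᶜ).dens : ℝ) =
        ∑ A ∈ (univ : Finset V).powerset, (-1) ^ #A * ((A.inf B).dens : ℝ) := by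
    have h := congrArg (Int.cast : ℤ → ℝ) (inclusion_exclusion_card_inf_compl univ B)
    push_cast at h
    simp only [nnratCast_dens, h, sum_div, mul_div_assoc]
  rw [inclusion_exclusion, sum_powerset, card_univ, tsum_eq_sum (s := range (Fintype.card V + 1))]
  · refine sum_congr rfl fun k _ ↦ ?_
    rw [binomialMoment, mul_sum]
    exact sum_congr rfl fun A hA ↦ by rw [mem_powersetCard_univ.1 hA]
  · intro k hk
    rw [binomialMoment_eq_zero_of_card_lt B (by simpa using hk), mul_zero]

end BinomialMoments

theorem tendsto_dens_inf_compl_of_binomialMoment {ι : Type*} {l : Filter ι}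
    {Ω V : ι → Type*} [∀ i, Fintype (Ω i)] [∀ i, DecidableEq (Ω i)] [∀ i, Fintype (V i)]
    (B : ∀ i, V i → Finset (Ω i)) {μ d : ℝ}
    (hlim : ∀ k, Tendsto (fun i ↦ binomialMoment (B i) k) l (nhds (μ ^ k / k.factorial)))
    (hdom : ∀ i k, binomialMoment (B i) k ≤ d ^ k / k.factorial) :
    Tendsto (fun i ↦ ((univ.inf fun v ↦ (B i v)ᶜ).dens : ℝ)) l (nhds (Real.exp (-μ))) := by
  have exp_series : Real.exp (-μ) = ∑' k : ℕ, (-1) ^ k * (μ ^ k / k.factorial) := by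
    rw [Real.exp_eq_exp_ℝ, NormedSpace.exp_eq_tsum_div]
    exact tsum_congr fun k ↦ by rw [neg_pow, mul_div_assoc]
  simp only [dens_inf_compl_eq_tsum, exp_series]
  refine tendsto_tsum_of_dominated_convergence (Real.summable_pow_div_factorial d)
    (fun k ↦ (hlim k).const_mul _) (Eventually.of_forall fun i k ↦ ?_)
  simpa [abs_of_nonneg (binomialMoment_nonneg _ _)] using hdom i k

section Interedges

variable {T : Type*} [Fintype T] (H : SimpleGraph T) [DecidableRel H.Adj]

lemma card_interedges_univ_univ : #(H.interedges univ univ) = 2 * #H.edgeFinset := by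
  simp [H.two_mul_card_edgeFinset, SimpleGraph.interedges_def]

variable {H} {d : ℕ} (hd : ∀ x, H.degree x ≤ d)

include hd

lemma card_interedges_le_card_mul (s t : Finset T) : #(H.interedges s t) ≤ #s * d := by
  rw [SimpleGraph.interedges_def, card_filter, sum_product, ← smul_eq_mul]
  refine sum_le_card_nsmul _ _ _ fun x _ ↦ ?_
  rw [← card_filter]
  refine (card_le_card fun y hy ↦ ?_).trans (hd x)
  simpa using (mem_filter.1 hy).2

lemma two_mul_card_edgeFinset_le [DecidableEq T] (s : Finset T) :
    2 * #H.edgeFinset ≤ #(H.interedges s s) + 2 * (#sᶜ * d) := by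
  have cover : H.interedges univ univ ⊆
      H.interedges s s ∪ (H.interedges sᶜ univ ∪ H.interedges univ sᶜ) := by
    rintro ⟨x, y⟩ h
    simp only [SimpleGraph.mk_mem_interedges_iff, mem_union, mem_compl, mem_univ] at h ⊢
    tauto
  have comm : #(H.interedges univ sᶜ) = #(H.interedges sᶜ univ) :=
    have := H.symm
    Rel.card_interedges_comm _ _
  have bound := card_interedges_le_card_mul hd sᶜ univ
  rw [← card_interedges_univ_univ]
  calc #(H.interedges univ univ)
      ≤ #(H.interedges s s) + (#(H.interedges sᶜ univ) + #(H.interedges univ sᶜ)) :=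
        (card_le_card cover).trans <| (card_union_le _ _).trans <|
          Nat.add_le_add_left (card_union_le _ _) _
    _ ≤ #(H.interedges s s) + 2 * (#sᶜ * d) := by omega

end Interedges

lemma exists_perm_fixing_pair {α : Type*} {P : Set α} [Finite P] {x y x' y' : α}
    (hx : x ∉ P) (hy : y ∉ P) (hx' : x' ∉ P) (hy' : y' ∉ P) (hxy : x ≠ y) (hxy' : x' ≠ y') :
    ∃ π : Equiv.Perm α, (∀ p ∈ P, π p = p) ∧ π x = x' ∧ π y = y' := by
  have injective_extension : ∀ {u v : α}, u ∉ P → v ∉ P → u ≠ v →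
      Function.Injective (Sum.elim ((↑) : P → α) ![u, v]) := by
    intro u v hu hv huv
    refine Subtype.val_injective.sumElim ?_ ?_
    · simpa [Function.Injective, Fin.forall_fin_two, eq_comm] using huv
    · rintro ⟨p, hp⟩ j rfl
      fin_cases j <;> contradiction
  obtain ⟨π, hπ⟩ := Equiv.Perm.exists_extending_pair _ _
    (injective_extension hx hy hxy) (injective_extension hx' hy' hxy')
  exact ⟨π, fun p hp ↦ hπ (.inl ⟨p, hp⟩), hπ (.inr 0), hπ (.inr 1)⟩

section UniformBijection

variable {S T V : Type*} [Fintype S]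

lemma two_mul_card_le [Fintype V] (e : V × Fin 2 ↪ S) :
    2 * Fintype.card V ≤ Fintype.card S := by
  simpa [mul_comm] using Fintype.card_le_of_embedding e

variable [DecidableEq S]

/-- The sockets of the variable nodes outside `A`, where variable node `v` owns the two sockets
`e (v, 0)` and `e (v, 1)`; sockets outside the range of `e` are free as well. -/
def freeSockets (e : V × Fin 2 ↪ S) (A : Finset V) : Finset S := ((A ×ˢ univ).map e)ᶜ

variable (e : V × Fin 2 ↪ S)

lemma mem_freeSockets {A : Finset V} {v : V} {j : Fin 2} :
    e (v, j) ∈ freeSockets e A ↔ v ∉ A := by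
  simp [freeSockets]

lemma card_compl_freeSockets (A : Finset V) : #(freeSockets e A)ᶜ = 2 * #A := by
  simp [freeSockets, mul_comm]

lemma card_freeSockets (A : Finset V) :
    (#(freeSockets e A) : ℝ) = Fintype.card S - 2 * #A := by
  have h := card_add_card_compl (freeSockets e A)
  rw [card_compl_freeSockets] at h
  rw [eq_sub_iff_add_eq]
  exact_mod_cast h

variable (H : SimpleGraph T) [DecidableRel H.Adj]

/-- The number of ordered pairs of adjacent vertices of `H` that `σ` assigns to the sockets left
free by the variable nodes in `A`. -/
def freePairs (A : Finset V) (σ : S ≃ T) : ℕ :=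
  #(H.interedges ((freeSockets e A).map σ.toEmbedding) ((freeSockets e A).map σ.toEmbedding))

lemma freePairs_eq_card_filter_offDiag (A : Finset V) (σ : S ≃ T) :
    freePairs e H A σ = #{p ∈ (freeSockets e A).offDiag | H.Adj (σ p.1) (σ p.2)} := by
  refine (card_equiv (σ.prodCongr σ) fun p ↦ ?_).symm
  simp only [mem_filter, mem_offDiag, SimpleGraph.mem_interedges_iff, Equiv.prodCongr_apply,
    Prod.map_fst, Prod.map_snd, mem_map_equiv, Equiv.symm_apply_apply]
  exact ⟨fun h ↦ ⟨h.1.1, h.1.2.1, h.2⟩,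
    fun h ↦ ⟨⟨h.1, h.2.1, fun hp ↦ h.2.2.ne (congrArg σ hp)⟩, h.2.2⟩⟩

variable [Fintype T]

lemma freePairs_le_two_mul_card_edgeFinset (A : Finset V) (σ : S ≃ T) :
    freePairs e H A σ ≤ 2 * #H.edgeFinset := by
  rw [← card_interedges_univ_univ]
  exact card_le_card (H.interedges_mono (subset_univ _) (subset_univ _))

variable {H} in
lemma freePairs_le_card_mul {d : ℕ} (hd : ∀ x, H.degree x ≤ d) (A : Finset V) (σ : S ≃ T) :
    freePairs e H A σ ≤ #(freeSockets e A) * d := by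
  simpa only [freePairs, card_map] using card_interedges_le_card_mul hd
    ((freeSockets e A).map σ.toEmbedding) ((freeSockets e A).map σ.toEmbedding)

variable {H} in
lemma two_mul_card_edgeFinset_le_freePairs {d : ℕ} (hd : ∀ x, H.degree x ≤ d) (A : Finset V)
    (σ : S ≃ T) : 2 * #H.edgeFinset ≤ freePairs e H A σ + 4 * #A * d := by
  classical
  have h := two_mul_card_edgeFinset_le hd ((freeSockets e A).map σ.toEmbedding)
  rw [card_compl, card_map, ← Fintype.card_congr σ, ← card_compl, card_compl_freeSockets] at h
  exact h.trans (Nat.add_le_add_left (by linarith) _)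

variable [DecidableEq T]

/-- The event that a bijection sends the two sockets of the variable node `v` to two adjacent
vertices of `H`. -/
def pairEvent (v : V) : Finset (S ≃ T) := {σ | H.Adj (σ (e (v, 0))) (σ (e (v, 1)))}

lemma mem_inf_pairEvent {A : Finset V} {σ : S ≃ T} :
    σ ∈ A.inf (pairEvent e H) ↔ ∀ v ∈ A, H.Adj (σ (e (v, 0))) (σ (e (v, 1))) := by
  simp [mem_inf, pairEvent]

-- A permutation of the sockets that fixes those of `A` and carries `x`, `y` to the sockets of `v`
-- preserves the uniform measure and the event for `A`.
lemma card_filter_adj_eq_card_inf_insert [DecidableEq V] {A : Finset V} {v : V} (hv : v ∉ A)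
    {x y : S} (hx : x ∈ freeSockets e A) (hy : y ∈ freeSockets e A) (hxy : x ≠ y) :
    #{σ ∈ A.inf (pairEvent e H) | H.Adj (σ x) (σ y)} = #((insert v A).inf (pairEvent e H)) := by
  obtain ⟨π, hfix, hπx, hπy⟩ := exists_perm_fixing_pair (P := ((freeSockets e A)ᶜ : Finset S))
    (x := e (v, 0)) (y := e (v, 1)) (x' := x) (y' := y) (by simpa [mem_freeSockets])
    (by simpa [mem_freeSockets]) (by simpa) (by simpa) (by simp) hxy
  have hπ : ∀ u ∈ A, ∀ j, π (e (u, j)) = e (u, j) := fun u hu j ↦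
    hfix _ (by simpa [mem_freeSockets] using hu)
  refine card_equiv (π.symm.equivCongr (Equiv.refl T)) fun σ ↦ ?_
  simp only [mem_filter, mem_inf_pairEvent, forall_mem_insert]
  rw [and_comm]
  simp +contextual [hπx, hπy, hπ]

lemma card_offDiag_mul_card_inf_insert [DecidableEq V] {A : Finset V} {v : V} (hv : v ∉ A) :
    #(freeSockets e A).offDiag * #((insert v A).inf (pairEvent e H)) =
      ∑ σ ∈ A.inf (pairEvent e H), freePairs e H A σ := by
  simp only [freePairs_eq_card_filter_offDiag]
  refine Eq.trans ?_ (sum_card_bipartiteAbove_eq_sum_card_bipartiteBelow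
    (fun (p : S × S) (σ : S ≃ T) ↦ H.Adj (σ p.1) (σ p.2)))
  rw [← smul_eq_mul, ← sum_const]
  refine sum_congr rfl fun p hp ↦ ?_
  rw [mem_offDiag] at hp
  exact (card_filter_adj_eq_card_inf_insert e H hv hp.1 hp.2.1 hp.2.2).symm

variable [Fintype V]

lemma mul_succ_mul_binomialMoment_pairEvent (k : ℕ) :
    ((Fintype.card S - 2 * k) * (Fintype.card S - 2 * k - 1) *
        ((k + 1) * binomialMoment (pairEvent e H) (k + 1)) : ℝ) =
      ∑ A ∈ powersetCard k univ, (Fintype.card V - k : ℝ) *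
        ((∑ σ ∈ A.inf (pairEvent e H), (freePairs e H A σ : ℝ)) / Fintype.card (S ≃ T)) := by
  classical
  rw [succ_mul_binomialMoment_succ, mul_sum]
  refine sum_congr rfl fun A hA ↦ ?_
  obtain rfl := mem_powersetCard_univ.1 hA
  have card_compl_eq : (#Aᶜ : ℝ) = Fintype.card V - #A := by
    rw [card_compl, Nat.cast_sub (card_le_univ A)]
  have card_offDiag_eq : (#(freeSockets e A).offDiag : ℝ) =
      (Fintype.card S - 2 * #A) * (Fintype.card S - 2 * #A - 1) := by
    rw [offDiag_card, Nat.cast_sub (Nat.le_mul_self _), Nat.cast_mul, card_freeSockets]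
    ring
  rw [mul_sum, ← card_compl_eq, ← card_offDiag_eq, ← nsmul_eq_mul #Aᶜ, ← sum_const]
  refine sum_congr rfl fun v hv ↦ ?_
  rw [nnratCast_dens, ← mul_div_assoc]
  exact_mod_cast congrArg (fun m : ℕ ↦ (m : ℝ) / Fintype.card (S ≃ T))
    (card_offDiag_mul_card_inf_insert e H (mem_compl.1 hv))

lemma succ_mul_binomialMoment_pairEvent_succ_le {k : ℕ} (hk : 2 * k + 1 < Fintype.card S) {c : ℝ}
    (hc : ∀ A : Finset V, #A = k → ∀ σ : S ≃ T, (freePairs e H A σ : ℝ) ≤ c) :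
    (k + 1) * binomialMoment (pairEvent e H) (k + 1) ≤
      (Fintype.card V - k) / (Fintype.card S - 2 * k) * (c / (Fintype.card S - (2 * k + 1))) *
        binomialMoment (pairEvent e H) k := by
  have hkS : (2 * k + 1 : ℝ) < Fintype.card S := by exact_mod_cast hk
  rw [div_mul_div_comm, div_mul_eq_mul_div, ← sub_sub,
    le_div_iff₀' (mul_pos (by linarith) (by linarith)), mul_succ_mul_binomialMoment_pairEvent,
    binomialMoment, mul_sum]
  refine sum_le_sum fun A hA ↦ ?_
  have hkV : (k : ℝ) ≤ Fintype.card V := by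
    exact_mod_cast (mem_powersetCard_univ.1 hA) ▸ card_le_univ A
  have mean_le : (∑ σ ∈ A.inf (pairEvent e H), (freePairs e H A σ : ℝ)) / Fintype.card (S ≃ T) ≤
      c * (A.inf (pairEvent e H)).dens := by
    rw [nnratCast_dens, ← mul_div_assoc, mul_comm, ← nsmul_eq_mul]
    gcongr
    exact sum_le_card_nsmul _ _ _ fun σ _ ↦ hc A (mem_powersetCard_univ.1 hA) σ
  rw [mul_assoc]
  exact mul_le_mul_of_nonneg_left mean_le (by linarith)

lemma le_succ_mul_binomialMoment_pairEvent_succ {k : ℕ} (hk : 2 * k + 1 < Fintype.card S) {c : ℝ}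
    (hc : ∀ A : Finset V, #A = k → ∀ σ : S ≃ T, c ≤ freePairs e H A σ) :
    (Fintype.card V - k) / (Fintype.card S - 2 * k) * (c / (Fintype.card S - (2 * k + 1))) *
        binomialMoment (pairEvent e H) k ≤
      (k + 1) * binomialMoment (pairEvent e H) (k + 1) := by
  have hkS : (2 * k + 1 : ℝ) < Fintype.card S := by exact_mod_cast hk
  rw [div_mul_div_comm, div_mul_eq_mul_div, ← sub_sub,
    div_le_iff₀' (mul_pos (by linarith) (by linarith)), mul_succ_mul_binomialMoment_pairEvent,
    binomialMoment, mul_sum]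
  refine sum_le_sum fun A hA ↦ ?_
  have hkV : (k : ℝ) ≤ Fintype.card V := by
    exact_mod_cast (mem_powersetCard_univ.1 hA) ▸ card_le_univ A
  have le_mean : c * (A.inf (pairEvent e H)).dens ≤
      (∑ σ ∈ A.inf (pairEvent e H), (freePairs e H A σ : ℝ)) / Fintype.card (S ≃ T) := by
    rw [nnratCast_dens, ← mul_div_assoc, mul_comm, ← nsmul_eq_mul]
    gcongr
    exact card_nsmul_le_sum _ _ _ fun σ _ ↦ hc A (mem_powersetCard_univ.1 hA) σ
  rw [mul_assoc]
  exact mul_le_mul_of_nonneg_left le_mean (by linarith)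

variable {H} {d : ℕ} (hd : ∀ x, H.degree x ≤ d)

include hd

lemma succ_mul_binomialMoment_pairEvent_succ_le_mul (k : ℕ) :
    (k + 1) * binomialMoment (pairEvent e H) (k + 1) ≤ d * binomialMoment (pairEvent e H) k := by
  have moment_nonneg : 0 ≤ binomialMoment (pairEvent e H) k := binomialMoment_nonneg _ _
  have hVS := two_mul_card_le e
  rcases lt_or_ge (Fintype.card V) (k + 1) with hk | hk
  · rw [binomialMoment_eq_zero_of_card_lt _ hk, mul_zero]
    positivity
  have free_pos : (0 : ℝ) < Fintype.card S - (2 * k + 1) := by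
    rw [sub_pos]
    exact_mod_cast (by omega : 2 * k + 1 < Fintype.card S)
  have free_pos' : (0 : ℝ) < Fintype.card S - 2 * k := by linarith
  have ratio_le_one : ((Fintype.card V - k) / (Fintype.card S - (2 * k + 1)) : ℝ) ≤ 1 := by
    rw [div_le_one free_pos, sub_le_sub_iff]
    exact_mod_cast (by omega : Fintype.card V + (2 * k + 1) ≤ Fintype.card S + k)
  calc (k + 1) * binomialMoment (pairEvent e H) (k + 1)
      ≤ (Fintype.card V - k) / (Fintype.card S - 2 * k) *
          ((Fintype.card S - 2 * k) * d / (Fintype.card S - (2 * k + 1))) *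
          binomialMoment (pairEvent e H) k :=
        succ_mul_binomialMoment_pairEvent_succ_le e H (by omega) fun A hA σ ↦ by
          rw [← hA, ← card_freeSockets]
          exact_mod_cast freePairs_le_card_mul e hd A σ
    _ = (Fintype.card V - k) / (Fintype.card S - (2 * k + 1)) *
          (d * binomialMoment (pairEvent e H) k) := by
        rw [div_mul_div_comm, mul_left_comm, mul_div_mul_left _ _ free_pos'.ne']
        ring
    _ ≤ d * binomialMoment (pairEvent e H) k :=
        mul_le_of_le_one_left (by positivity) ratio_le_one

lemma binomialMoment_pairEvent_le (k : ℕ) :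
    binomialMoment (pairEvent e H) k ≤ d ^ k / k.factorial := by
  induction k with
  | zero =>
    rcases isEmpty_or_nonempty (S ≃ T)
    · simp [binomialMoment]
    · simp [binomialMoment_zero]
  | succ k ih =>
    have succ_le := succ_mul_binomialMoment_pairEvent_succ_le_mul e hd k
    rw [← le_div_iff₀' (by positivity)] at succ_le
    calc binomialMoment (pairEvent e H) (k + 1)
        ≤ d * binomialMoment (pairEvent e H) k / (k + 1) := succ_le
      _ ≤ d * (d ^ k / k.factorial) / (k + 1) := by gcongr
      _ = d ^ (k + 1) / (k + 1).factorial := by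
        rw [Nat.factorial_succ]
        push_cast
        field_simp
        ring

end UniformBijection

lemma tendsto_sub_div_sub {ι : Type*} {l : Filter ι} {u x : ι → ℝ} {p : ℝ}
    (hx : Tendsto x l atTop) (hu : Tendsto (fun i ↦ u i / x i) l (nhds p)) (a b : ℝ) :
    Tendsto (fun i ↦ (u i - a) / (x i - b)) l (nhds p) := by
  have const_div : ∀ r : ℝ, Tendsto (fun i ↦ r / x i) l (nhds 0) := fun r ↦
    tendsto_const_nhds.div_atTop hx
  have h := (hu.sub (const_div a)).div ((tendsto_const_nhds (x := (1 : ℝ))).sub (const_div b))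
    (by norm_num)
  rw [sub_zero, sub_zero, div_one] at h
  refine h.congr' ?_
  filter_upwards [hx.eventually_gt_atTop 0] with i hi
  rw [Pi.div_apply, ← sub_div, one_sub_div hi.ne', div_div_div_cancel_right₀ hi.ne']

section PoissonLimit

variable {ι : Type*} {l : Filter ι} {S T V : ι → Type*}
  [∀ i, Fintype (S i)] [∀ i, Fintype (T i)] [∀ i, Fintype (V i)]
  [∀ i, DecidableEq (S i)] [∀ i, DecidableEq (T i)] [∀ i, Nonempty (S i ≃ T i)]
  (e : ∀ i, V i × Fin 2 ↪ S i)
  {H : ∀ i, SimpleGraph (T i)} [∀ i, DecidableRel (H i).Adj]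
  {d : ℕ} (hd : ∀ i x, (H i).degree x ≤ d) {p c : ℝ}
  (hS : Tendsto (fun i ↦ (Fintype.card (S i) : ℝ)) l atTop)
  (hV : Tendsto (fun i ↦ (Fintype.card (V i) / Fintype.card (S i) : ℝ)) l (nhds p))
  (hH : Tendsto (fun i ↦ (2 * #(H i).edgeFinset / Fintype.card (S i) : ℝ)) l (nhds c))

include hd hS hV hH

lemma tendsto_binomialMoment_pairEvent (k : ℕ) :
    Tendsto (fun i ↦ binomialMoment (pairEvent (e i) (H i)) k) l
      (nhds ((p * c) ^ k / k.factorial)) := by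
  induction k with
  | zero => simpa [binomialMoment_zero] using tendsto_const_nhds
  | succ k ih =>
    have ratio_limit : ∀ a : ℝ, Tendsto (fun i ↦ (Fintype.card (V i) - k : ℝ) /
        (Fintype.card (S i) - 2 * k) * ((2 * #(H i).edgeFinset - a) /
          (Fintype.card (S i) - (2 * k + 1))) * binomialMoment (pairEvent (e i) (H i)) k) l
        (nhds (p * c * ((p * c) ^ k / k.factorial))) := fun a ↦
      ((tendsto_sub_div_sub hS hV _ _).mul (tendsto_sub_div_sub hS hH _ _)).mul ih
    have succ_limit : Tendsto (fun i ↦ (k + 1) * binomialMoment (pairEvent (e i) (H i)) (k + 1)) l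
        (nhds (p * c * ((p * c) ^ k / k.factorial))) := by
      refine tendsto_of_tendsto_of_tendsto_of_le_of_le' (ratio_limit (4 * k * d)) (ratio_limit 0)
        ?_ ?_
      all_goals
        filter_upwards [hS.eventually_gt_atTop (2 * k + 1)] with i hi
        have hk : 2 * k + 1 < Fintype.card (S i) := by exact_mod_cast hi
      · refine le_succ_mul_binomialMoment_pairEvent_succ (e i) (H i) hk fun A hA σ ↦ ?_
        rw [sub_le_iff_le_add, ← hA]
        exact_mod_cast two_mul_card_edgeFinset_le_freePairs (e i) (hd i) A σ
      · refine succ_mul_binomialMoment_pairEvent_succ_le (e i) (H i) hk fun A _ σ ↦ ?_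
        rw [sub_zero]
        exact_mod_cast freePairs_le_two_mul_card_edgeFinset (e i) (H i) A σ
    have limit_eq : (p * c) ^ (k + 1) / (k + 1).factorial =
        p * c * ((p * c) ^ k / k.factorial) / (k + 1) := by
      rw [Nat.factorial_succ]
      push_cast
      field_simp
      ring
    rw [limit_eq]
    refine (succ_limit.div_const _).congr fun i ↦ mul_div_cancel_left₀ _ (by positivity)

theorem tendsto_dens_inf_compl_pairEvent :
    Tendsto (fun i ↦ ((univ.inf fun v ↦ (pairEvent (e i) (H i) v)ᶜ).dens : ℝ)) l
      (nhds (Real.exp (-(p * c)))) :=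
  tendsto_dens_inf_compl_of_binomialMoment (fun i ↦ pairEvent (e i) (H i))
    (tendsto_binomialMoment_pairEvent e hd hS hV hH)
    fun i ↦ binomialMoment_pairEvent_le (e i) (hd i)

end PoissonLimit

section Collisions

variable {S T K : Type*} [Fintype S] [DecidableEq S] [DecidableEq K]
  {f : T → K} {d : ℕ}

-- Composing with the transposition of `z` and `u` shows that every `u ∉ W` collides with `w` as
-- often as `z` does, and for each bijection at most `d` of them do.
lemma card_compl_mul_card_collision_le [Fintype T] (hf : ∀ c, #{t | f t = c} ≤ d)
    {F : Finset (S ≃ T)} {W : Finset S} {w z : S} (hw : w ∈ W) (hz : z ∉ W)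
    (hF : ∀ u ∉ W, ∀ σ ∈ F, (Equiv.swap z u).trans σ ∈ F) :
    #Wᶜ * #{σ ∈ F | f (σ z) = f (σ w)} ≤ d * #F := by
  have collision_count : ∀ u ∈ Wᶜ,
      #{σ ∈ F | f (σ z) = f (σ w)} = #{σ ∈ F | f (σ u) = f (σ w)} := by
    intro u hu
    rw [mem_compl] at hu
    have hwz : w ≠ z := ne_of_mem_of_not_mem hw hz
    have hwu : w ≠ u := ne_of_mem_of_not_mem hw hu
    have involutive : ∀ σ : S ≃ T, (Equiv.swap z u).trans ((Equiv.swap z u).trans σ) = σ :=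
      fun σ ↦ by ext; simp
    refine card_nbij' (fun σ ↦ (Equiv.swap z u).trans σ) (fun σ ↦ (Equiv.swap z u).trans σ)
      ?_ ?_ (fun σ _ ↦ involutive σ) (fun σ _ ↦ involutive σ)
    all_goals
      intro σ hσ
      simp only [mem_coe, mem_filter] at hσ ⊢
      simpa [hF u hu σ hσ.1, Equiv.swap_apply_of_ne_of_ne hwz hwu] using hσ.2
  calc #Wᶜ * #{σ ∈ F | f (σ z) = f (σ w)}
      = ∑ u ∈ Wᶜ, #{σ ∈ F | f (σ u) = f (σ w)} := by
        rw [← smul_eq_mul, ← sum_const, sum_congr rfl collision_count]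
    _ = ∑ σ ∈ F, #{u ∈ Wᶜ | f (σ u) = f (σ w)} :=
        sum_card_bipartiteAbove_eq_sum_card_bipartiteBelow fun u (σ : S ≃ T) ↦ f (σ u) = f (σ w)
    _ ≤ ∑ _σ ∈ F, d := sum_le_sum fun σ _ ↦
        (card_le_card_of_injOn σ (fun u hu ↦ by simpa using (mem_filter.1 hu).2)
          σ.injective.injOn).trans (hf (f (σ w)))
    _ = d * #F := by rw [sum_const, smul_eq_mul, mul_comm]

variable [Fintype T] [DecidableEq T]

lemma dens_two_collisions_le (hf : ∀ c, #{t | f t = c} ≤ d) (hS : 6 ≤ Fintype.card S)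
    {x y z w : S} (hyx : y ≠ x) (hzx : z ≠ x) (hzy : z ≠ y) (hzw : z ≠ w) :
    (dens {σ : S ≃ T | f (σ y) = f (σ x) ∧ f (σ z) = f (σ w)} : ℝ) ≤
      4 * d ^ 2 / Fintype.card S ^ 2 := by
  have half_le : ∀ W : Finset S, #W ≤ 3 → (Fintype.card S / 2 : ℝ) ≤ #Wᶜ := by
    intro W hW
    rw [div_le_iff₀ two_pos, card_compl]
    exact_mod_cast (by omega : Fintype.card S ≤ (Fintype.card S - #W) * 2)
  set one : Finset (S ≃ T) := {σ | f (σ y) = f (σ x)} with one_def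
  set two : Finset (S ≃ T) := {σ ∈ one | f (σ z) = f (σ w)} with two_def
  have card_one_le : (Fintype.card S / 2 * #one : ℝ) ≤ d * Fintype.card (S ≃ T) := by
    refine (mul_le_mul_of_nonneg_right (half_le {x} (by simp)) (by positivity)).trans ?_
    exact_mod_cast card_compl_mul_card_collision_le hf (F := univ) (mem_singleton_self x)
      (by simpa) (by simp)
  have card_two_le : (Fintype.card S / 2 * #two : ℝ) ≤ d * #one := by
    refine (mul_le_mul_of_nonneg_right (half_le {x, y, w} card_le_three) (by positivity)).trans ?_
    refine mod_cast card_compl_mul_card_collision_le hf (by simp) (by simp [*]) fun u hu σ hσ ↦ ?_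
    simp only [mem_insert, mem_singleton, not_or] at hu
    simpa [one_def, Equiv.swap_apply_of_ne_of_ne hzx.symm (Ne.symm hu.1),
      Equiv.swap_apply_of_ne_of_ne hzy.symm (Ne.symm hu.2.1)] using hσ
  have card_le : (Fintype.card S / 2) ^ 2 * (#two : ℝ) ≤ d ^ 2 * Fintype.card (S ≃ T) := by
    calc (Fintype.card S / 2) ^ 2 * (#two : ℝ)
        = Fintype.card S / 2 * (Fintype.card S / 2 * #two) := by ring
      _ ≤ Fintype.card S / 2 * (d * #one) := by gcongr
      _ = d * (Fintype.card S / 2 * #one) := by ring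
      _ ≤ d * (d * Fintype.card (S ≃ T)) := by gcongr
      _ = d ^ 2 * Fintype.card (S ≃ T) := by ring
  rw [← filter_filter, ← one_def, ← two_def]
  have : (0 : ℝ) < Fintype.card S := by exact_mod_cast (by omega : 0 < Fintype.card S)
  rw [nnratCast_dens]
  refine div_le_of_le_mul₀ (by positivity) (by positivity) ?_
  rw [div_mul_eq_mul_div, le_div_iff₀ (by positivity)]
  linarith

variable {V : Type*} [DecidableEq V]

/-- The event that a fibre of `g` contains `x ≠ y` colliding under `f ∘ σ` and a further point `z`
colliding with some other point `w` of that fibre. The points `w` and `x`, `y` may coincide, so only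
three sockets of a node are required, and the two coincidences are still almost independent. -/
def doubleCollision (g : S → V) (f : T → K) : Finset (S ≃ T) :=
  {σ | ∃ x y z w, (g y = g x ∧ g z = g x ∧ g w = g x) ∧ (y ≠ x ∧ z ≠ x ∧ z ≠ y ∧ z ≠ w) ∧
    f (σ y) = f (σ x) ∧ f (σ z) = f (σ w)}

lemma dens_doubleCollision_le {g : S → V} {D : ℕ} (hg : ∀ v, #{s | g s = v} ≤ D)
    (hf : ∀ c, #{t | f t = c} ≤ d) (hS : 6 ≤ Fintype.card S) :
    ((doubleCollision g f : Finset (S ≃ T)).dens : ℝ) ≤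
      4 * D ^ 3 * d ^ 2 / Fintype.card S := by
  let quadruples : Finset (Σ _ : S, S × S × S) :=
    univ.sigma fun x ↦ univ.filter (g · = g x) ×ˢ univ.filter (g · = g x) ×ˢ univ.filter (g · = g x)
  let collisions (q : Σ _ : S, S × S × S) : Finset (S ≃ T) :=
    {σ | (q.2.1 ≠ q.1 ∧ q.2.2.1 ≠ q.1 ∧ q.2.2.1 ≠ q.2.1 ∧ q.2.2.1 ≠ q.2.2.2) ∧
      f (σ q.2.1) = f (σ q.1) ∧ f (σ q.2.2.1) = f (σ q.2.2.2)}
  have covering : (doubleCollision g f : Finset (S ≃ T)) ⊆ quadruples.biUnion collisions := by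
    intro σ hσ
    obtain ⟨x, y, z, w, hg, h⟩ := (mem_filter.1 hσ).2
    exact mem_biUnion.2
      ⟨⟨x, y, z, w⟩, by simpa [quadruples] using hg, by simpa [collisions] using h⟩
  have card_quadruples : #quadruples ≤ Fintype.card S * D ^ 3 := by
    rw [card_sigma, ← smul_eq_mul]
    refine sum_le_card_nsmul _ _ _ fun x _ ↦ ?_
    rw [card_product, card_product, pow_succ', sq]
    gcongr <;> exact hg _
  have dens_collisions_le : ∀ q ∈ quadruples,
      ((collisions q).dens : ℝ) ≤ 4 * d ^ 2 / Fintype.card S ^ 2 := by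
    rintro ⟨x, y, z, w⟩ -
    by_cases hne : y ≠ x ∧ z ≠ x ∧ z ≠ y ∧ z ≠ w
    · refine le_trans ?_ (dens_two_collisions_le (T := T) hf hS hne.1 hne.2.1 hne.2.2.1 hne.2.2.2)
      exact_mod_cast dens_le_dens fun σ hσ ↦ by simpa using (mem_filter.1 hσ).2.2
    · simp only [collisions, hne, false_and, filter_false, dens_empty, NNRat.cast_zero]
      positivity
  have : (0 : ℝ) < Fintype.card S := by exact_mod_cast (by omega : 0 < Fintype.card S)
  calc ((doubleCollision g f : Finset (S ≃ T)).dens : ℝ)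
      ≤ ∑ q ∈ quadruples, ((collisions q).dens : ℝ) := by
        exact_mod_cast (dens_le_dens covering).trans dens_biUnion_le
    _ ≤ #quadruples • (4 * d ^ 2 / Fintype.card S ^ 2 : ℝ) :=
        sum_le_card_nsmul _ _ _ dens_collisions_le
    _ ≤ (Fintype.card S * D ^ 3 : ℝ) * (4 * d ^ 2 / Fintype.card S ^ 2) := by
        rw [nsmul_eq_mul]
        gcongr
        exact_mod_cast card_quadruples
    _ = 4 * D ^ 3 * d ^ 2 / Fintype.card S := by field_simp

end Collisions

section ConfigurationModel

/-- The half-edges of a family of nodes, node `v` having `deg v` of them. -/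
abbrev Socket {V : Type*} (deg : V → ℕ) := Σ v, Fin (deg v)

/-- The sockets of the node `v`. -/
def socketsOf {V : Type*} [Fintype V] [DecidableEq V] (deg : V → ℕ) (v : V) :
    Finset (Socket deg) := {p | p.1 = v}

@[simp]
lemma mem_socketsOf {V : Type*} [Fintype V] [DecidableEq V] {deg : V → ℕ} {v : V}
    {p : Socket deg} : p ∈ socketsOf deg v ↔ p.1 = v := by
  simp [socketsOf]

lemma socketsOf_eq_map {V : Type*} [Fintype V] [DecidableEq V] (deg : V → ℕ) (v : V) :
    socketsOf deg v = univ.map (Function.Embedding.sigmaMk v) := by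
  ext ⟨w, j⟩
  simp only [mem_socketsOf, Finset.mem_map, mem_univ, true_and]
  exact ⟨by rintro rfl; exact ⟨j, rfl⟩, fun ⟨_, h⟩ ↦ (congrArg Sigma.fst h).symm⟩

lemma card_socketsOf {V : Type*} [Fintype V] [DecidableEq V] (deg : V → ℕ) (v : V) :
    #(socketsOf deg v) = deg v := by
  rw [socketsOf_eq_map, card_map, card_univ, Fintype.card_fin]

variable {K : Type*} {len : K → ℕ}

/-- The sockets of the check node `c` at which the local word `w` is nonzero. -/
def wordSockets (c : K) (w : Fin (len c) → ZMod 2) : Finset (Socket len) :=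
  ({j | w j ≠ 0} : Finset (Fin (len c))).map (Function.Embedding.sigmaMk c)

lemma mem_wordSockets {c : K} {w : Fin (len c) → ZMod 2} {p : Socket len} :
    p ∈ wordSockets c w ↔ ∃ j, w j ≠ 0 ∧ ⟨c, j⟩ = p := by
  simp [wordSockets]

lemma card_wordSockets (c : K) (w : Fin (len c) → ZMod 2) :
    #(wordSockets c w) = hammingNorm w :=
  card_map _

variable [DecidableEq K]

/-- The word that the indicator of the set `A` of check sockets induces on the check node `c`. -/
def localWord (A : Finset (Socket len)) (c : K) : Fin (len c) → ZMod 2 :=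
  fun j ↦ if ⟨c, j⟩ ∈ A then 1 else 0

lemma localWord_eq_iff {A : Finset (Socket len)} {c : K} {w : Fin (len c) → ZMod 2} :
    localWord A c = w ↔ ∀ j, (⟨c, j⟩ : Socket len) ∈ A ↔ w j ≠ 0 := by
  rw [funext_iff]
  refine forall_congr' fun j ↦ ?_
  have eq_zero_or_one : ∀ a : ZMod 2, a = 0 ∨ a = 1 := by decide
  rcases eq_zero_or_one (w j) with h | h <;> simp [localWord, h]

lemma hammingNorm_localWord (A : Finset (Socket len)) (c : K) :
    hammingNorm (localWord A c) = #{p ∈ A | p.1 = c} := by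
  refine card_bij (fun j _ ↦ ⟨c, j⟩) (by simp [localWord]) (by simp) ?_
  rintro ⟨_, j⟩ hp
  obtain ⟨hA, rfl⟩ := mem_filter.1 hp
  exact ⟨j, by simp [localWord, hA], rfl⟩

lemma localWord_wordSockets (c : K) (w : Fin (len c) → ZMod 2) :
    localWord (wordSockets c w) c = w := by
  simp [localWord_eq_iff, mem_wordSockets]

lemma localWord_wordSockets_of_ne {c c' : K} (h : c' ≠ c) (w : Fin (len c) → ZMod 2) :
    localWord (wordSockets c w) c' = 0 := by
  simp [localWord_eq_iff, mem_wordSockets, h.symm]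

lemma wordSockets_localWord {A : Finset (Socket len)} {c : K} (hA : ∀ p ∈ A, p.1 = c) :
    wordSockets c (localWord A c) = A := by
  ext p
  rw [mem_wordSockets]
  constructor
  · rintro ⟨j, hj, rfl⟩
    exact (localWord_eq_iff.1 rfl j).2 hj
  · intro hp
    obtain rfl := hA p hp
    exact ⟨p.2, (localWord_eq_iff.1 rfl p.2).1 hp, rfl⟩

variable (𝒞 : ∀ c, Finset (Fin (len c) → ZMod 2))

/-- The indicator of `A` is a codeword of the local code of every check node. -/
def IsLocalCodeword (A : Finset (Socket len)) : Prop := ∀ c, localWord A c ∈ 𝒞 c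

instance [Fintype K] : DecidablePred (IsLocalCodeword 𝒞) :=
  fun A ↦ inferInstanceAs (Decidable (∀ c, localWord A c ∈ 𝒞 c))

variable {𝒞} in
lemma IsLocalCodeword.exists_ne_fst_eq (hnorm : ∀ c, ∀ w ∈ 𝒞 c, hammingNorm w ≠ 1)
    {A : Finset (Socket len)} (hA : IsLocalCodeword 𝒞 A) {p : Socket len} (hp : p ∈ A) :
    ∃ q ∈ A, q ≠ p ∧ q.1 = p.1 := by
  have card_ne_one := hnorm p.1 _ (hA p.1)
  rw [hammingNorm_localWord] at card_ne_one
  have hp' : p ∈ {q ∈ A | q.1 = p.1} := mem_filter.2 ⟨hp, rfl⟩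
  obtain ⟨q, hq, hqp⟩ := exists_mem_ne
    (lt_of_le_of_ne (card_pos.2 ⟨p, hp'⟩) card_ne_one.symm) p
  exact ⟨q, (mem_filter.1 hq).1, hqp, (mem_filter.1 hq).2⟩

/-- Two check sockets are adjacent when they form a weight-two word accepted by all local codes. -/
def codewordGraph : SimpleGraph (Socket len) where
  Adj p q := p ≠ q ∧ IsLocalCodeword 𝒞 {p, q}
  symm := ⟨fun p q h ↦ ⟨h.1.symm, pair_comm p q ▸ h.2⟩⟩
  loopless := ⟨fun _ h ↦ h.1 rfl⟩

instance [Fintype K] : DecidableRel (codewordGraph 𝒞).Adj :=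
  fun p q ↦ inferInstanceAs (Decidable (p ≠ q ∧ IsLocalCodeword 𝒞 {p, q}))

variable {𝒞}

lemma codewordGraph_adj {p q : Socket len} :
    (codewordGraph 𝒞).Adj p q ↔ p ≠ q ∧ IsLocalCodeword 𝒞 {p, q} := Iff.rfl

lemma fst_eq_of_codewordGraph_adj (hnorm : ∀ c, ∀ w ∈ 𝒞 c, hammingNorm w ≠ 1)
    {p q : Socket len} (h : (codewordGraph 𝒞).Adj p q) : q.1 = p.1 := by
  obtain ⟨r, hr, hrp, hr1⟩ := h.2.exists_ne_fst_eq hnorm (mem_insert_self p {q})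
  simp only [mem_insert, mem_singleton, hrp, false_or] at hr
  exact hr ▸ hr1

variable [Fintype K]

lemma degree_codewordGraph_le (hnorm : ∀ c, ∀ w ∈ 𝒞 c, hammingNorm w ≠ 1) (p : Socket len) :
    (codewordGraph 𝒞).degree p ≤ len p.1 := by
  rw [← card_socketsOf len p.1]
  refine card_le_card fun q hq ↦ mem_socketsOf.2 ?_
  exact fst_eq_of_codewordGraph_adj hnorm ((SimpleGraph.mem_neighborFinset _ _ _).1 hq)

lemma card_edgeFinset_codewordGraph_eq_card_pairs :
    #(codewordGraph 𝒞).edgeFinset =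
      #{A : Finset (Socket len) | #A = 2 ∧ IsLocalCodeword 𝒞 A} := by
  refine card_bij (fun z _ ↦ z.toFinset) ?_ ?_ ?_
  · intro z hz
    induction z with | _ p q
    obtain ⟨hpq, hcode⟩ := (SimpleGraph.mem_edgeFinset.1 hz : (codewordGraph 𝒞).Adj p q)
    simpa [Sym2.toFinset_mk_eq, card_pair hpq] using hcode
  · exact fun z _ z' _ h ↦ Sym2.ext fun p ↦ by rw [← Sym2.mem_toFinset, h, Sym2.mem_toFinset]
  · intro A hA
    obtain ⟨hA2, hcode⟩ := (mem_filter.1 hA).2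
    obtain ⟨p, q, hpq, rfl⟩ := card_eq_two.1 hA2
    exact ⟨s(p, q), SimpleGraph.mem_edgeFinset.2 ⟨hpq, hcode⟩, Sym2.toFinset_mk_eq⟩

theorem card_edgeFinset_codewordGraph (hzero : ∀ c, 0 ∈ 𝒞 c)
    (hnorm : ∀ c, ∀ w ∈ 𝒞 c, hammingNorm w ≠ 1) :
    #(codewordGraph 𝒞).edgeFinset = ∑ c, #{w ∈ 𝒞 c | hammingNorm w = 2} := by
  rw [card_edgeFinset_codewordGraph_eq_card_pairs, ← card_sigma]
  symm
  refine card_bij (fun x _ ↦ wordSockets x.1 x.2) ?_ ?_ ?_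
  · rintro ⟨c, w⟩ hw
    obtain ⟨hw, hw2⟩ := mem_filter.1 (mem_sigma.1 hw).2
    refine mem_filter.2 ⟨mem_univ _, by rw [card_wordSockets, hw2], fun c' ↦ ?_⟩
    obtain rfl | hc := eq_or_ne c' c
    · rwa [localWord_wordSockets]
    · rw [localWord_wordSockets_of_ne hc]
      exact hzero c'
  · rintro ⟨c, w⟩ hw ⟨c', w'⟩ - (h : wordSockets c w = wordSockets c' w')
    have w_ne_zero : w ≠ 0 := by
      rintro rfl
      simp at hw
    have hc : c' = c := by
      by_contra hc
      rw [← localWord_wordSockets c w, h, localWord_wordSockets_of_ne (Ne.symm hc)] at w_ne_zero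
      exact w_ne_zero rfl
    subst hc
    rw [← localWord_wordSockets c' w, h, localWord_wordSockets]
  · intro A hA
    obtain ⟨hA2, hcode⟩ := (mem_filter.1 hA).2
    obtain ⟨p, q, hpq, rfl⟩ := card_eq_two.1 hA2
    have hq : q.1 = p.1 := fst_eq_of_codewordGraph_adj hnorm (codewordGraph_adj.2 ⟨hpq, hcode⟩)
    have word_eq : wordSockets p.1 (localWord {p, q} p.1) = {p, q} :=
      wordSockets_localWord (by simp [hq])
    refine ⟨⟨p.1, localWord {p, q} p.1⟩, mem_sigma.2 ⟨mem_univ _, ?_⟩, word_eq⟩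
    exact mem_filter.2 ⟨hcode p.1, by rw [← card_wordSockets, word_eq, hA2]⟩

end ConfigurationModel

section MinimumDistanceOne

variable {V : Type*} {deg : V → ℕ}

/-- The two sockets of each variable node of degree two. -/
def degreeTwoSocket (deg : V → ℕ) : {v // deg v = 2} × Fin 2 ↪ Socket deg where
  toFun p := ⟨p.1, Fin.cast p.1.2.symm p.2⟩
  inj' := by
    rintro ⟨⟨v, hv⟩, j⟩ ⟨⟨v', hv'⟩, j'⟩ h
    obtain ⟨rfl, h⟩ := Sigma.mk.inj h
    simpa using h

variable [Fintype V] [DecidableEq V]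

lemma socketsOf_degreeTwo (v : {v // deg v = 2}) :
    socketsOf deg v = {degreeTwoSocket deg (v, 0), degreeTwoSocket deg (v, 1)} := by
  refine (eq_of_subset_of_card_le ?_ ?_).symm
  · simp only [insert_subset_iff, singleton_subset_iff, mem_socketsOf]
    exact ⟨rfl, rfl⟩
  · rw [card_socketsOf, v.2, card_pair (by simp)]

variable {K : Type*} [DecidableEq K] {len : K → ℕ}
  {𝒞 : ∀ c, Finset (Fin (len c) → ZMod 2)}

lemma exists_socket_colliding_with (hnorm : ∀ c, ∀ w ∈ 𝒞 c, hammingNorm w ≠ 1)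
    {σ : Socket deg ≃ Socket len} {v : V}
    (hcode : IsLocalCodeword 𝒞 ((socketsOf deg v).map σ.toEmbedding)) {p : Socket deg}
    (hp : p.1 = v) : ∃ q : Socket deg, q.1 = v ∧ q ≠ p ∧ (σ q).1 = (σ p).1 := by
  obtain ⟨_, hmem, hqp, hfst⟩ := hcode.exists_ne_fst_eq hnorm
    (mem_map_of_mem σ.toEmbedding (mem_socketsOf.2 hp))
  obtain ⟨q, hq, rfl⟩ := Finset.mem_map.1 hmem
  exact ⟨q, mem_socketsOf.1 hq, ne_of_apply_ne σ hqp, hfst⟩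

variable [Fintype K]

variable (deg 𝒞) in
/-- The event that some word of Hamming weight one is a codeword of the code obtained by joining
variable sockets to check sockets. Since weight one is the least possible weight of a nonzero word,
this is the event that the minimum distance is one. -/
def weightOneEvent : Finset (Socket deg ≃ Socket len) :=
  {σ | ∃ x : V → ZMod 2, hammingNorm x = 1 ∧ ∀ c, (fun j ↦ x (σ.symm ⟨c, j⟩).1) ∈ 𝒞 c}

lemma hammingNorm_eq_one_iff {x : V → ZMod 2} :
    hammingNorm x = 1 ↔ ∃ v, x = Pi.single v 1 := by
  have eq_one_of_ne_zero : ∀ a : ZMod 2, a ≠ 0 → a = 1 := by decide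
  constructor
  · intro hx
    obtain ⟨v, hv⟩ := card_eq_one.1 hx
    have ne_zero_iff : ∀ u, x u ≠ 0 ↔ u = v := fun u ↦ by
      rw [← mem_singleton, ← hv, mem_filter, and_iff_right (mem_univ u)]
    refine ⟨v, funext fun u ↦ ?_⟩
    obtain rfl | hu := eq_or_ne u v
    · simpa using eq_one_of_ne_zero _ ((ne_zero_iff u).2 rfl)
    · simpa [hu] using mt (ne_zero_iff u).1 hu
  · rintro ⟨v, rfl⟩
    simp [hammingNorm, Pi.single_apply, filter_eq']

lemma mem_weightOneEvent {σ : Socket deg ≃ Socket len} :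
    σ ∈ weightOneEvent deg 𝒞 ↔
      ∃ v, IsLocalCodeword 𝒞 ((socketsOf deg v).map σ.toEmbedding) := by
  have induced_word (v : V) (c : K) :
      (fun j ↦ Pi.single (M := fun _ ↦ ZMod 2) v 1 (σ.symm ⟨c, j⟩).1) =
        localWord ((socketsOf deg v).map σ.toEmbedding) c := by
    ext j
    simp [localWord, mem_map_equiv, Pi.single_apply]
  simp [weightOneEvent, hammingNorm_eq_one_iff, IsLocalCodeword, ← induced_word]

lemma mem_pairEvent_degreeTwoSocket {σ : Socket deg ≃ Socket len} {v : {v // deg v = 2}} :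
    σ ∈ pairEvent (degreeTwoSocket deg) (codewordGraph 𝒞) v ↔
      IsLocalCodeword 𝒞 ((socketsOf deg v).map σ.toEmbedding) := by
  simp [pairEvent, codewordGraph_adj, socketsOf_degreeTwo]

lemma compl_inf_pairEvent_subset_weightOneEvent :
    (univ.inf fun v ↦ (pairEvent (degreeTwoSocket deg) (codewordGraph 𝒞) v)ᶜ)ᶜ ⊆
      weightOneEvent deg 𝒞 := by
  intro σ hσ
  simp only [mem_compl, mem_inf, mem_univ, true_imp_iff, not_forall, not_not] at hσ
  obtain ⟨v, hv⟩ := hσ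
  exact mem_weightOneEvent.2 ⟨v, mem_pairEvent_degreeTwoSocket.1 hv⟩

lemma deg_eq_two_or_mem_doubleCollision (hnorm : ∀ c, ∀ w ∈ 𝒞 c, hammingNorm w ≠ 1)
    {σ : Socket deg ≃ Socket len} {v : V}
    (hv : 0 < deg v) (hcode : IsLocalCodeword 𝒞 ((socketsOf deg v).map σ.toEmbedding)) :
    deg v = 2 ∨ σ ∈ doubleCollision (Sigma.fst : Socket deg → V) (Sigma.fst : Socket len → K) := by
  obtain ⟨x, hx⟩ : ∃ x : Socket deg, x.1 = v := ⟨⟨v, 0, hv⟩, rfl⟩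
  obtain ⟨y, hy, hyx, hfyx⟩ := exists_socket_colliding_with hnorm hcode hx
  by_cases third : ∃ z : Socket deg, z.1 = v ∧ z ≠ x ∧ z ≠ y
  · right
    obtain ⟨z, hz, hzx, hzy⟩ := third
    obtain ⟨w, hw, hwz, hfwz⟩ := exists_socket_colliding_with hnorm hcode hz
    subst hx
    simp only [doubleCollision, mem_filter, mem_univ, true_and]
    exact ⟨x, y, z, w, ⟨hy, hz, hw⟩, ⟨hyx, hzx, hzy, hwz.symm⟩, hfyx, hfwz.symm⟩
  · left
    have sockets_eq : socketsOf deg v = {x, y} := by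
      ext z
      rw [mem_socketsOf, mem_insert, mem_singleton]
      refine ⟨fun hz ↦ ?_, by rintro (rfl | rfl) <;> assumption⟩
      by_contra! h
      exact third ⟨z, hz, h⟩
    rw [← card_socketsOf deg v, sockets_eq, card_pair hyx.symm]

lemma weightOneEvent_subset (hnorm : ∀ c, ∀ w ∈ 𝒞 c, hammingNorm w ≠ 1) (hdeg : ∀ v, 0 < deg v) :
    weightOneEvent deg 𝒞 ⊆
      (univ.inf fun v ↦ (pairEvent (degreeTwoSocket deg) (codewordGraph 𝒞) v)ᶜ)ᶜ ∪
        doubleCollision (Sigma.fst : Socket deg → V) (Sigma.fst : Socket len → K) := by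
  intro σ hσ
  obtain ⟨v, hcode⟩ := mem_weightOneEvent.1 hσ
  refine mem_union.2 ((deg_eq_two_or_mem_doubleCollision hnorm (hdeg v) hcode).imp_left fun hv ↦ ?_)
  refine mem_compl.2 fun h ↦ mem_compl.1 (mem_inf.1 h ⟨v, hv⟩ (mem_univ _)) ?_
  exact mem_pairEvent_degreeTwoSocket.2 hcode

end MinimumDistanceOne

section Limit

variable {ι : Type*} {l : Filter ι} {V K : ι → Type*}
  [∀ i, Fintype (V i)] [∀ i, DecidableEq (V i)] [∀ i, Fintype (K i)] [∀ i, DecidableEq (K i)]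
  {deg : ∀ i, V i → ℕ} {len : ∀ i, K i → ℕ} [∀ i, Nonempty (Socket (deg i) ≃ Socket (len i))]
  {𝒞 : ∀ i c, Finset (Fin (len i c) → ZMod 2)} {D L : ℕ} {p c : ℝ}

theorem tendsto_dens_weightOneEvent (hdeg : ∀ i v, 0 < deg i v) (hD : ∀ i v, deg i v ≤ D)
    (hL : ∀ i c, len i c ≤ L) (hzero : ∀ i c, 0 ∈ 𝒞 i c)
    (hnorm : ∀ i c, ∀ w ∈ 𝒞 i c, hammingNorm w ≠ 1)
    (hE : Tendsto (fun i ↦ (Fintype.card (Socket (deg i)) : ℝ)) l atTop)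
    (hp : Tendsto (fun i ↦ (Fintype.card {v // deg i v = 2} / Fintype.card (Socket (deg i)) : ℝ))
      l (nhds p))
    (hc : Tendsto (fun i ↦ (2 * ∑ c, #{w ∈ 𝒞 i c | hammingNorm w = 2} : ℝ) /
      Fintype.card (Socket (deg i))) l (nhds c)) :
    Tendsto (fun i ↦ ((weightOneEvent (deg i) (𝒞 i)).dens : ℝ)) l
      (nhds (1 - Real.exp (-(p * c)))) := by
  have limit_compl_inf : Tendsto (fun i ↦ (((univ.inf fun v ↦
      (pairEvent (degreeTwoSocket (deg i)) (codewordGraph (𝒞 i)) v)ᶜ)ᶜ).dens : ℝ)) l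
      (nhds (1 - Real.exp (-(p * c)))) := by
    refine (tendsto_const_nhds.sub (tendsto_dens_inf_compl_pairEvent
      (fun i ↦ degreeTwoSocket (deg i)) (H := fun i ↦ codewordGraph (𝒞 i))
      (fun i q ↦ (degree_codewordGraph_le (hnorm i) q).trans (hL i q.1)) hE hp ?_)).congr
      fun i ↦ ?_
    · exact hc.congr fun i ↦ by rw [card_edgeFinset_codewordGraph (hzero i) (hnorm i), Nat.cast_sum]
    · rw [sub_eq_iff_eq_add, ← NNRat.cast_add, compl_eq_univ_sdiff,
        dens_sdiff_add_dens_eq_dens (subset_univ _), dens_univ, NNRat.cast_one]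
  have limit_doubleCollision : Tendsto (fun i ↦
      (4 * D ^ 3 * L ^ 2 : ℝ) / Fintype.card (Socket (deg i))) l (nhds 0) :=
    tendsto_const_nhds.div_atTop hE
  have limit_upper := limit_compl_inf.add limit_doubleCollision
  rw [add_zero] at limit_upper
  refine tendsto_of_tendsto_of_tendsto_of_le_of_le' limit_compl_inf limit_upper
    (.of_forall fun i ↦ mod_cast dens_le_dens compl_inf_pairEvent_subset_weightOneEvent) ?_
  filter_upwards [hE.eventually_ge_atTop 6] with i hi
  have le_add_dens := (dens_le_dens (weightOneEvent_subset (hnorm i) (hdeg i))).trans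
    (dens_union_le _ _)
  refine (NNRat.cast_le.2 le_add_dens).trans ?_
  rw [NNRat.cast_add]
  gcongr
  exact dens_doubleCollision_le (fun v ↦ (card_socketsOf (deg i) v).trans_le (hD i v))
    (fun c ↦ (card_socketsOf (len i) c).trans_le (hL i c)) (mod_cast hi)

end Limit

section NodeClasses

variable {α : Type*} [Fintype α] {n d : α → ℕ} {r : α → ℝ} {E : ℕ}

lemma sum_nodes_eq (hd : ∀ a, 0 < d a) (hn : ∀ a, (n a * d a : ℝ) = r a * E) (f : α → ℝ) :
    ∑ v : Σ a, Fin (n a), f v.1 = (∑ a, r a * f a / d a) * E := by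
  rw [Fintype.sum_sigma, sum_mul]
  refine sum_congr rfl fun a _ ↦ ?_
  have hda : (d a : ℝ) ≠ 0 := by exact_mod_cast (hd a).ne'
  simp only [sum_const, card_univ, Fintype.card_fin, nsmul_eq_mul]
  rw [div_mul_eq_mul_div, eq_div_iff hda]
  linear_combination f a * hn a

lemma card_socket_nodes (hd : ∀ a, 0 < d a) (hn : ∀ a, (n a * d a : ℝ) = r a * E)
    (hr : ∑ a, r a = 1) : Fintype.card (Socket fun v : Σ a, Fin (n a) ↦ d v.1) = E := by
  have h := sum_nodes_eq hd hn fun a ↦ d a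
  have r_eq : ∀ a, r a * d a / d a = r a := fun a ↦
    mul_div_cancel_right₀ _ (by exact_mod_cast (hd a).ne')
  simp only [r_eq, hr, one_mul] at h
  simp only [Fintype.card_sigma, Fintype.card_fin]
  exact_mod_cast h

lemma card_degreeTwo_nodes (hd : ∀ a, 0 < d a) (hn : ∀ a, (n a * d a : ℝ) = r a * E) :
    (Fintype.card {v : Σ a, Fin (n a) // d v.1 = 2} : ℝ) = (∑ a with d a = 2, r a) / 2 * E := by
  rw [Fintype.card_subtype, card_filter, Nat.cast_sum]
  refine (sum_nodes_eq hd hn fun a ↦ ((if d a = 2 then 1 else 0 : ℕ) : ℝ)).trans ?_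
  rw [sum_filter, sum_div]
  congr 1
  refine sum_congr rfl fun a _ ↦ ?_
  split_ifs with h <;> simp [h]

lemma nonempty_equiv_socket_nodes {β : Type*} [Fintype β] {m s : β → ℕ} {ρ : β → ℝ}
    (hd : ∀ a, 0 < d a) (hn : ∀ a, (n a * d a : ℝ) = r a * E) (hr : ∑ a, r a = 1)
    (hs : ∀ t, 0 < s t) (hm : ∀ t, (m t * s t : ℝ) = ρ t * E) (hρ : ∑ t, ρ t = 1) :
    Nonempty ((Socket fun v : Σ a, Fin (n a) ↦ d v.1) ≃
      (Socket fun c : Σ t, Fin (m t) ↦ s c.1)) :=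
  Fintype.card_eq.1 ((card_socket_nodes hd hn hr).trans (card_socket_nodes hs hm hρ).symm)

end NodeClasses

lemma tendsto_mul_div_self {ι : Type*} {l : Filter ι} {x : ι → ℝ} (hx : Tendsto x l atTop)
    (a : ℝ) : Tendsto (fun i ↦ a * x i / x i) l (nhds a) :=
  tendsto_const_nhds.congr' <| (hx.eventually_gt_atTop 0).mono fun _ hi ↦
    (mul_div_cancel_right₀ a hi.ne').symm

end GLDPC

theorem stmt_2_general {ι : Type*} {l : Filter ι}
    (D nc : ℕ)
    (deg : Fin D → ℕ) (hdeg : ∀ a, 0 < deg a)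
    (lamv : Fin D → ℝ) (hlamsum : ∑ a, lamv a = 1)
    (s : Fin nc → ℕ) (hs : ∀ t, 0 < s t)
    (𝒞 : ∀ t : Fin nc, Finset (Fin (s t) → ZMod 2)) (hzero : ∀ t, 0 ∈ 𝒞 t)
    (hdist : ∀ t, ∀ v ∈ 𝒞 t, hammingNorm v ≠ 1)
    (ρ : Fin nc → ℝ) (hρsum : ∑ t, ρ t = 1)
    (lam2 : ℝ) (hlam2 : lam2 = ∑ a with deg a = 2, lamv a)
    (C : ℝ) (hC : C = 2 * ∑ t, ρ t * (Finset.card {w ∈ 𝒞 t | hammingNorm w = 2} : ℝ) / (s t : ℝ))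
    (E : ι → ℕ) (hE : Tendsto E l atTop)
    (vcount : Fin D → ι → ℕ)
    (hv : ∀ a i, (vcount a i : ℝ) * (deg a : ℝ) = lamv a * (E i : ℝ))
    (mcount : Fin nc → ι → ℕ)
    (hm : ∀ t i, (mcount t i : ℝ) * (s t : ℝ) = ρ t * (E i : ℝ)) :
    Tendsto (fun i ↦
        (Finset.card {σ : (Σ v : (Σ a : Fin D, Fin (vcount a i)), Fin (deg v.1)) ≃
              (Σ cn : (Σ t : Fin nc, Fin (mcount t i)), Fin (s cn.1)) |
            ∃ x : (Σ a : Fin D, Fin (vcount a i)) → ZMod 2, hammingNorm x = 1 ∧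
              ∀ t, ∀ idx : Fin (mcount t i), (fun j ↦ x (σ.symm ⟨⟨t, idx⟩, j⟩).1) ∈ 𝒞 t} : ℝ) /
          Fintype.card ((Σ v : (Σ a : Fin D, Fin (vcount a i)), Fin (deg v.1)) ≃
            (Σ cn : (Σ t : Fin nc, Fin (mcount t i)), Fin (s cn.1))))
      l (nhds (1 - Real.exp (-(lam2 * C / 2)))) := by
  have card_sockets (i : ι) := GLDPC.card_socket_nodes hdeg (hv · i) hlamsum
  have (i : ι) := GLDPC.nonempty_equiv_socket_nodes hdeg (hv · i) hlamsum hs (hm · i) hρsum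
  have hE' : Tendsto (fun i ↦ (E i : ℝ)) l atTop := tendsto_natCast_atTop_atTop.comp hE
  have limit := GLDPC.tendsto_dens_weightOneEvent (l := l) (p := lam2 / 2) (c := C)
    (deg := fun i (v : Σ a, Fin (vcount a i)) ↦ deg v.1)
    (len := fun i (c : Σ t, Fin (mcount t i)) ↦ s c.1) (𝒞 := fun _ c ↦ 𝒞 c.1)
    (D := ∑ a, deg a) (L := ∑ t, s t) (fun _ v ↦ hdeg v.1)
    (fun _ v ↦ Finset.single_le_sum_of_canonicallyOrdered (Finset.mem_univ v.1))
    (fun _ c ↦ Finset.single_le_sum_of_canonicallyOrdered (Finset.mem_univ c.1))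
    (fun _ c ↦ hzero c.1) (fun _ c ↦ hdist c.1) ?_ ?_ ?_
  · rw [show lam2 * C / 2 = lam2 / 2 * C by ring]
    refine limit.congr fun i ↦ ?_
    rw [Finset.nnratCast_dens]
    congr! 4
    simp [GLDPC.weightOneEvent, Sigma.forall]
  · simpa only [card_sockets] using hE'
  · refine (GLDPC.tendsto_mul_div_self hE' (lam2 / 2)).congr fun i ↦ ?_
    rw [card_sockets, GLDPC.card_degreeTwo_nodes hdeg (hv · i), hlam2]
  · refine (GLDPC.tendsto_mul_div_self hE' C).congr fun i ↦ ?_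
    rw [card_sockets, Nat.cast_sum, GLDPC.sum_nodes_eq hs (hm · i)
      fun t ↦ (Finset.card {w ∈ 𝒞 t | hammingNorm w = 2} : ℝ), hC, mul_assoc]

/-- **Ensemble 2, probability of minimum distance 1.** In the unstructured irregular GLDPC
ensemble (configuration model) with VN degree classes `deg a ≥ 2` carrying edge fractions
`lamv a` (so `λ'(0) = λ_2 = ∑_{a : deg a = 2} lamv a`, and degree-2 VNs are present), CN types
`t` with local codes `ker H̄_t` of length `s t` and minimum distance `≥ 2`, edge fractions
`ρ t`, at least one CN type having weight-2 local codewords (`r_t = 2`), and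
`C = 2 ∑_{t : r_t = 2} ρ_t A_2^{(t)}/s_t`, the probability (over the uniformly random
matching `σ` of VN sockets to CN sockets) that the minimum distance equals 1 — i.e. that
some Hamming-weight-1 word is a codeword — tends to `1 − exp(−λ'(0)·C/2) > 0` as the
block length tends to infinity. -/
theorem stmt_2
    (D nc : ℕ)
    (deg : Fin D → ℕ) (hdeg : ∀ a, 2 ≤ deg a) (hdeg2 : ∃ a, deg a = 2)
    (lamv : Fin D → ℝ) (hlampos : ∀ a, 0 < lamv a) (hlamsum : ∑ a, lamv a = 1)
    (s mr : Fin nc → ℕ) (hs : ∀ t, 0 < s t)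
    (Hbar : ∀ t : Fin nc, Matrix (Fin (mr t)) (Fin (s t)) (ZMod 2))
    (hdist : ∀ t, ∀ v : Fin (s t) → ZMod 2,
      Matrix.mulVec (Hbar t) v = 0 → hammingNorm v ≠ 1)
    (hmin2 : ∃ t, 0 < numWeight2 (Hbar t))
    (ρ : Fin nc → ℝ) (hρpos : ∀ t, 0 < ρ t) (hρsum : ∑ t, ρ t = 1)
    (lam2 : ℝ) (hlam2 : lam2 = ∑ a ∈ Finset.univ.filter (fun a : Fin D => deg a = 2), lamv a)
    (C : ℝ) (hC : C = 2 * ∑ t, ρ t * (numWeight2 (Hbar t) : ℝ) / (s t : ℝ))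
    (E : ℕ → ℕ) (hE : StrictMono E)
    (vcount : Fin D → ℕ → ℕ) (hvpos : ∀ a i, 0 < vcount a i)
    (hv : ∀ a i, (vcount a i : ℝ) * (deg a : ℝ) = lamv a * (E i : ℝ))
    (mcount : Fin nc → ℕ → ℕ) (hmpos : ∀ t i, 0 < mcount t i)
    (hm : ∀ t i, (mcount t i : ℝ) * (s t : ℝ) = ρ t * (E i : ℝ)) :
    Tendsto (fun i : ℕ =>
        ((Finset.univ.filter
            (fun σ : (Σ v : (Σ a : Fin D, Fin (vcount a i)), Fin (deg v.1)) ≃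
                (Σ cn : (Σ t : Fin nc, Fin (mcount t i)), Fin (s cn.1)) =>
              ∃ x : (Σ a : Fin D, Fin (vcount a i)) → ZMod 2,
                hammingNorm x = 1 ∧
                ∀ t : Fin nc, ∀ idx : Fin (mcount t i),
                  Matrix.mulVec (Hbar t)
                    (fun jj : Fin (s t) => x ((σ.symm ⟨⟨t, idx⟩, jj⟩).1)) = 0)).card : ℝ)
          / (Fintype.card
              ((Σ v : (Σ a : Fin D, Fin (vcount a i)), Fin (deg v.1)) ≃
                (Σ cn : (Σ t : Fin nc, Fin (mcount t i)), Fin (s cn.1))) : ℝ))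
      atTop (nhds (1 - Real.exp (-(lam2 * C / 2)))) ∧
    0 < 1 - Real.exp (-(lam2 * C / 2)) := by
  refine ⟨?_, ?_⟩
  · simpa only [localCode, numWeight2, Finset.mem_filter, Finset.mem_univ, true_and] using
      stmt_2_general D nc deg (fun a ↦ two_pos.trans_le (hdeg a)) lamv hlamsum s hs
        (fun t ↦ localCode (Hbar t)) (by simp [localCode])
        (fun t w hw ↦ hdist t w (Finset.mem_filter.1 hw).2) ρ hρsum lam2 hlam2 C hC E
        hE.tendsto_atTop vcount hv mcount hm
  · obtain ⟨a, ha⟩ := hdeg2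
    obtain ⟨t, ht⟩ := hmin2
    have lam2_pos : 0 < lam2 := hlam2 ▸ Finset.sum_pos (fun b _ ↦ hlampos b) ⟨a, by simp [ha]⟩
    have C_pos : 0 < C := hC ▸ mul_pos two_pos (Finset.sum_pos'
      (fun u _ ↦ div_nonneg (mul_nonneg (hρpos u).le (Nat.cast_nonneg _)) (Nat.cast_nonneg _))
      ⟨t, Finset.mem_univ t, div_pos (mul_pos (hρpos t) (mod_cast ht)) (mod_cast hs t)⟩)
    exact sub_pos.2 (Real.exp_lt_one_iff.2 (by linarith [mul_pos lam2_pos C_pos]))
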